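/- Let n ≥ 4, let A be the Cartan matrix of type D_n and ι an admissible sequence adapted to A. Then: (i) the set of elements of the form S_{l_p}⋯S_{l_1} x_{r,n−1} (p ≥ 0, r, l_1,…,l_p ≥ 1) equals the set of tableaux [j_1,j_2,…,j_t]^D_s in Tab_{D,ι} with j_1 = ovl(n+1) and t even; (ii) the set of elements of the form S_{l_p}⋯S_{l_1} x_{r,n} (p ≥ 0, r, l_1,…,l_p ≥ 1) equals the set of tableaux [j_1,j_2,…,j_t]^D_s in Tab_{D,ι} with j_1 = ovl(n+1) and t odd. -/

import Mathlib

noncomputable section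

/-- The coordinate linear form `x_k` (as a coefficient vector). -/
def xc (k : ℕ) : ℕ → ℚ := fun l => if l = k then 1 else 0

/-- Cartan matrix of type `A_n`. -/
def cartanA (_n : ℕ) (i j : ℕ) : ℤ :=
  if i = j then 2 else if i + 1 = j ∨ j + 1 = i then -1 else 0

/-- Cartan matrix of type `B_n`. -/
def cartanB (n : ℕ) (i j : ℕ) : ℤ :=
  if i = j then 2
  else if i = n ∧ j = n - 1 then -2
  else if i + 1 = j ∨ j + 1 = i then -1 else 0

/-- Cartan matrix of type `C_n`. -/
def cartanC (n : ℕ) (i j : ℕ) : ℤ :=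
  if i = j then 2
  else if i = n - 1 ∧ j = n then -2
  else if i + 1 = j ∨ j + 1 = i then -1 else 0

/-- Cartan matrix of type `D_n`. -/
def cartanD (n : ℕ) (i j : ℕ) : ℤ :=
  if i = j then 2
  else if (i = n - 1 ∧ j = n) ∨ (i = n ∧ j = n - 1) then 0
  else if (i + 1 = j ∨ j + 1 = i) ∨ (i = n ∧ j = n - 2) ∨ (i = n - 2 ∧ j = n) then -1
  else 0

/-- `ι` (with positions indexed by `k ≥ 1`) takes values in `{1,…,n}`, has no two equal
consecutive entries, and every index occurs infinitely often. -/
def Admissible (n : ℕ) (ι : ℕ → ℕ) : Prop :=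
  (∀ k, 1 ≤ k → 1 ≤ ι k ∧ ι k ≤ n) ∧
  (∀ k, 1 ≤ k → ι k ≠ ι (k + 1)) ∧
  (∀ i, 1 ≤ i → i ≤ n → ∀ N, ∃ k, N ≤ k ∧ ι k = i)

/-- `k^+`: the next position after `k` carrying the same letter. -/
def kplus (ι : ℕ → ℕ) (k : ℕ) : ℕ := sInf {l | k < l ∧ ι l = ι k}

/-- `k^-`: the previous position (`≥ 1`) carrying the same letter, `0` if none. -/
def kminus (ι : ℕ → ℕ) (k : ℕ) : ℕ := sSup {l | 0 < l ∧ l < k ∧ ι l = ι k}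

/-- The linear form `β_k` (with `β_0 = 0`). -/
def beta (A : ℕ → ℕ → ℤ) (ι : ℕ → ℕ) (k : ℕ) : ℕ → ℚ :=
  if k = 0 then 0
  else xc k + (∑ j ∈ Finset.Ioo k (kplus ι k), (A (ι k) (ι j) : ℚ) • xc j) + xc (kplus ι k)

/-- The piecewise-linear operator `S_k`. -/
def Sop (A : ℕ → ℕ → ℤ) (ι : ℕ → ℕ) (k : ℕ) (φ : ℕ → ℚ) : ℕ → ℚ :=
  if 0 < φ k then φ - φ k • beta A ι k
  else φ - φ k • beta A ι (kminus ι k)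

/-- Membership in `Ξ_ι`: forms obtained from some `x_{j_0}` by finitely many operators `S_k`. -/
inductive XiMem (A : ℕ → ℕ → ℤ) (ι : ℕ → ℕ) : (ℕ → ℚ) → Prop
  | base (k : ℕ) (hk : 1 ≤ k) : XiMem A ι (xc k)
  | step (k : ℕ) (hk : 1 ≤ k) (φ : ℕ → ℚ) (h : XiMem A ι φ) : XiMem A ι (Sop A ι k φ)

/-- The set `Ξ_ι`. -/
def Xi (A : ℕ → ℕ → ℤ) (ι : ℕ → ℕ) : Set (ℕ → ℚ) := { φ | XiMem A ι φ }

/-- Forms obtained from a set `g` of generators by finitely many operators `S_k`. -/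
inductive XiMemFrom (A : ℕ → ℕ → ℤ) (ι : ℕ → ℕ) (g : Set (ℕ → ℚ)) : (ℕ → ℚ) → Prop
  | base (φ : ℕ → ℚ) (h : φ ∈ g) : XiMemFrom A ι g φ
  | step (k : ℕ) (hk : 1 ≤ k) (φ : ℕ → ℚ) (h : XiMemFrom A ι g φ) :
      XiMemFrom A ι g (Sop A ι k φ)

/-- `ι` is adapted to the Cartan matrix `A`: for `i ≠ j` with `a_{i,j} ≠ 0`, consecutive
members of the subsequence of `ι` consisting of the letters `i`, `j` are distinct. -/
def Adapted (n : ℕ) (A : ℕ → ℕ → ℤ) (ι : ℕ → ℕ) : Prop :=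
  ∀ i j, 1 ≤ i → i ≤ n → 1 ≤ j → j ≤ n → i ≠ j → A i j ≠ 0 →
    ∀ k l, 1 ≤ k → k < l → (ι k = i ∨ ι k = j) → (ι l = i ∨ ι l = j) →
      (∀ m, k < m → m < l → ι m ≠ i ∧ ι m ≠ j) → ι k ≠ ι l

/-- Position of the first occurrence of the letter `i` in `ι`. -/
def firstOcc (ι : ℕ → ℕ) (i : ℕ) : ℕ := sInf {k | 1 ≤ k ∧ ι k = i}

/-- `p_{i,j} = 1` iff the first occurrence of `i` precedes the first occurrence of `j`. -/
def pval (ι : ℕ → ℕ) (i j : ℕ) : ℕ := if firstOcc ι i < firstOcc ι j then 1 else 0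

/-- The function `P(k)` for types A, B, C (and `P(k) = 0` for `k > n`, `k ≤ 1`). -/
def PABC (ι : ℕ → ℕ) (n k : ℕ) : ℕ :=
  if k ≤ n then ∑ t ∈ Finset.Icc 2 k, pval ι t (t - 1) else 0

/-- The function `P(k)` for type D. -/
def PD (ι : ℕ → ℕ) (n k : ℕ) : ℕ :=
  if k = n then (∑ t ∈ Finset.Icc 2 (n - 2), pval ι t (t - 1)) + pval ι n (n - 2)
  else if k ≤ n then ∑ t ∈ Finset.Icc 2 k, pval ι t (t - 1) else 0

/-- `occPos ι j s`: the position of the `s`-th occurrence of the letter `j` in `ι`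
(`0` for `s = 0`). -/
def occPos (ι : ℕ → ℕ) (j : ℕ) : ℕ → ℕ
  | 0 => 0
  | s + 1 => sInf {k | occPos ι j s < k ∧ ι k = j}

/-- The double-indexed coordinate form `x_{s,j}`, with the conventions
`x_{s,0} = x_{s,n+1} = 0` and `x_{s,j} = 0` for `s ≤ 0`. -/
def xsj (ι : ℕ → ℕ) (n : ℕ) (s : ℤ) (j : ℕ) : ℕ → ℚ :=
  if 1 ≤ s ∧ 1 ≤ j ∧ j ≤ n then xc (occPos ι j s.toNat) else 0

/-- The double-indexed form `β_{s,j}`. -/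
def betasj (A : ℕ → ℕ → ℤ) (ι : ℕ → ℕ) (s : ℤ) (j : ℕ) : ℕ → ℚ :=
  beta A ι (occPos ι j s.toNat)

/-- The double-indexed operator `S_{m,j}`. -/
def Ssj (A : ℕ → ℕ → ℤ) (ι : ℕ → ℕ) (m j : ℕ) (φ : ℕ → ℚ) : ℕ → ℚ :=
  Sop A ι (occPos ι j m) φ

/- Entries of the ordered sets `J_X` are encoded as natural numbers:
an unbarred entry `j ∈ {1,…,n}` is encoded as `j`, a barred entry `j̄` is
encoded as `2n+1-j` (so that `n̄ = n+1, …, 1̄ = 2n` and the total order of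
`J_B = J_C` is the numerical order), and the extra symbol `ovl(n+1)` of
types C and D is encoded as `0`. -/

/-- The box of type A. -/
def boxA (ι : ℕ → ℕ) (n : ℕ) (s : ℤ) (j : ℕ) : ℕ → ℚ :=
  xsj ι n (s + (PABC ι n j : ℤ)) j - xsj ι n (s + (PABC ι n (j - 1) : ℤ) + 1) (j - 1)

/-- The box of type B. -/
def boxB (ι : ℕ → ℕ) (n : ℕ) (s : ℤ) (e : ℕ) : ℕ → ℚ :=
  if e ≤ n then
    xsj ι n (s + (PABC ι n e : ℤ)) e - xsj ι n (s + (PABC ι n (e - 1) : ℤ) + 1) (e - 1)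
  else
    xsj ι n (s + (PABC ι n (2 * n - e) : ℤ) + (n : ℤ) - ((2 * n + 1 - e : ℕ) : ℤ) + 1)
        (2 * n - e)
      - xsj ι n (s + (PABC ι n (2 * n + 1 - e) : ℤ) + (n : ℤ) - ((2 * n + 1 - e : ℕ) : ℤ) + 1)
          (2 * n + 1 - e)

/-- The box of type C (`ovl(n+1)` encoded as `0`). -/
def boxC (ι : ℕ → ℕ) (n : ℕ) (s : ℤ) (e : ℕ) : ℕ → ℚ :=
  if e = 0 then xsj ι n (s + (PABC ι n n : ℤ)) n
  else if e < n then
    xsj ι n (s + (PABC ι n e : ℤ)) e - xsj ι n (s + (PABC ι n (e - 1) : ℤ) + 1) (e - 1)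
  else if e = n then
    (2 : ℚ) • xsj ι n (s + (PABC ι n n : ℤ)) n
      - xsj ι n (s + (PABC ι n (n - 1) : ℤ) + 1) (n - 1)
  else if e = n + 1 then
    xsj ι n (s + (PABC ι n (n - 1) : ℤ) + 1) (n - 1)
      - (2 : ℚ) • xsj ι n (s + (PABC ι n n : ℤ) + 1) n
  else
    xsj ι n (s + (PABC ι n (2 * n - e) : ℤ) + (n : ℤ) - ((2 * n + 1 - e : ℕ) : ℤ) + 1)
        (2 * n - e)
      - xsj ι n (s + (PABC ι n (2 * n + 1 - e) : ℤ) + (n : ℤ) - ((2 * n + 1 - e : ℕ) : ℤ) + 1)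
          (2 * n + 1 - e)

/-- The box of type D (`ovl(n+1)` encoded as `0`, `n̄` as `n+1`, `ovl(n-1)` as `n+2`). -/
def boxD (ι : ℕ → ℕ) (n : ℕ) (s : ℤ) (e : ℕ) : ℕ → ℚ :=
  if e = 0 then xsj ι n (s + (PD ι n n : ℤ)) n
  else if e ≤ n - 2 then
    xsj ι n (s + (PD ι n e : ℤ)) e - xsj ι n (s + (PD ι n (e - 1) : ℤ) + 1) (e - 1)
  else if e = n - 1 then
    xsj ι n (s + (PD ι n (n - 1) : ℤ)) (n - 1) + xsj ι n (s + (PD ι n n : ℤ)) n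
      - xsj ι n (s + (PD ι n (n - 2) : ℤ) + 1) (n - 2)
  else if e = n then
    xsj ι n (s + (PD ι n n : ℤ)) n - xsj ι n (s + (PD ι n (n - 1) : ℤ) + 1) (n - 1)
  else if e = n + 1 then
    xsj ι n (s + (PD ι n (n - 1) : ℤ)) (n - 1) - xsj ι n (s + (PD ι n n : ℤ) + 1) n
  else if e = n + 2 then
    xsj ι n (s + (PD ι n (n - 2) : ℤ) + 1) (n - 2)
      - xsj ι n (s + (PD ι n (n - 1) : ℤ) + 1) (n - 1)
      - xsj ι n (s + (PD ι n n : ℤ) + 1) n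
  else
    xsj ι n (s + (PD ι n (2 * n - e) : ℤ) + (n : ℤ) - ((2 * n + 1 - e : ℕ) : ℤ)) (2 * n - e)
      - xsj ι n (s + (PD ι n (2 * n + 1 - e) : ℤ) + (n : ℤ) - ((2 * n + 1 - e : ℕ) : ℤ))
          (2 * n + 1 - e)

/-- The column tableau `[j_1,…,j_k]_s = Σ_{i=1}^k box_{s+k-i}(j_i)`. -/
def tab (box : ℤ → ℕ → ℕ → ℚ) (s : ℤ) (k : ℕ) (j : ℕ → ℕ) : ℕ → ℚ :=
  ∑ i ∈ Finset.Icc 1 k, box (s + (k : ℤ) - (i : ℤ)) (j i)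

/-- The set `Tab_{A,ι}`. -/
def TabA (ι : ℕ → ℕ) (n : ℕ) : Set (ℕ → ℚ) :=
  { T | ∃ (k : ℕ) (s : ℤ) (j : ℕ → ℕ),
      1 ≤ k ∧ k ≤ n ∧
      (∀ i, 1 ≤ i → i ≤ k → 1 ≤ j i ∧ j i ≤ n + 1) ∧
      (∀ i, 1 ≤ i → i < k → j i < j (i + 1)) ∧
      1 - (PABC ι n k : ℤ) ≤ s ∧
      T = tab (boxA ι n) s k j }

/-- `|·|` on encoded entries of `J_B = J_C`. -/
def absJ (n e : ℕ) : ℕ := if e ≤ n then e else 2 * n + 1 - e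

/-- The set `Tab_{B,ι}`. -/
def TabB (ι : ℕ → ℕ) (n : ℕ) : Set (ℕ → ℚ) :=
  { T | ∃ (k : ℕ) (s : ℤ) (j : ℕ → ℕ),
      1 ≤ k ∧ k ≤ n ∧
      (∀ i, 1 ≤ i → i ≤ k → 1 ≤ j i ∧ j i ≤ 2 * n) ∧
      (∀ i, 1 ≤ i → i < k → j i < j (i + 1)) ∧
      (k = n → ∀ l m, 1 ≤ l → l < m → m ≤ k → absJ n (j l) ≠ absJ n (j m)) ∧
      1 - (PABC ι n k : ℤ) ≤ s ∧
      T = tab (boxB ι n) s k j }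

/-- Defining conditions of `Tab_{C,ι}` on the data `(k,s,j)`. -/
def TabCcond (ι : ℕ → ℕ) (n : ℕ) (k : ℕ) (s : ℤ) (j : ℕ → ℕ) : Prop :=
  (1 ≤ k ∧ k ≤ n - 1 ∧
    (∀ i, 1 ≤ i → i ≤ k → 1 ≤ j i ∧ j i ≤ 2 * n) ∧
    (∀ i, 1 ≤ i → i < k → j i < j (i + 1)) ∧
    1 - (PABC ι n k : ℤ) ≤ s)
  ∨
  (j 1 = 0 ∧ 1 ≤ k ∧ k ≤ n + 1 ∧
    (∀ i, 2 ≤ i → i ≤ k → n + 1 ≤ j i ∧ j i ≤ 2 * n) ∧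
    (∀ i, 2 ≤ i → i < k → j i < j (i + 1)) ∧
    1 - (PABC ι n n : ℤ) ≤ s)

/-- The set `Tab_{C,ι}`. -/
def TabC (ι : ℕ → ℕ) (n : ℕ) : Set (ℕ → ℚ) :=
  { T | ∃ k s j, TabCcond ι n k s j ∧ T = tab (boxC ι n) s k j }

/-- The partial order on (encoded) `J_D`: `a ≤ b` iff `a = b`, or `a < b` numerically and
`(a,b)` is not the incomparable pair `(n, n̄)`. -/
def leD (n a b : ℕ) : Prop := a = b ∨ (a < b ∧ ¬(a = n ∧ b = n + 1))

/-- Defining conditions of `Tab_{D,ι}` on the data `(k,s,j)`. -/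
def TabDcond (ι : ℕ → ℕ) (n : ℕ) (k : ℕ) (s : ℤ) (j : ℕ → ℕ) : Prop :=
  (1 ≤ k ∧ k ≤ n - 2 ∧
    (∀ i, 1 ≤ i → i ≤ k → 1 ≤ j i ∧ j i ≤ 2 * n) ∧
    (∀ i, 1 ≤ i → i < k → ¬ leD n (j (i + 1)) (j i)) ∧
    1 - (PD ι n k : ℤ) ≤ s)
  ∨
  (j 1 = 0 ∧ 1 ≤ k ∧ k ≤ n + 1 ∧
    (∀ i, 2 ≤ i → i ≤ k → n + 1 ≤ j i ∧ j i ≤ 2 * n) ∧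
    (∀ i, 2 ≤ i → i < k → j i < j (i + 1)) ∧
    (k % 2 = 0 → 1 - (PD ι n (n - 1) : ℤ) ≤ s) ∧
    (k % 2 = 1 → 1 - (PD ι n n : ℤ) ≤ s))

/-- The set `Tab_{D,ι}`. -/
def TabD (ι : ℕ → ℕ) (n : ℕ) : Set (ℕ → ℚ) :=
  { T | ∃ k s j, TabDcond ι n k s j ∧ T = tab (boxD ι n) s k j }

end

/-!
A column with first entry `ovl(n+1)` is determined by the set `B ⊆ {1, …, n}` of the `b` whose bar
occurs in it, and such sets index the weights of the two half-spin representations, told apart by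
the parity of `#B`. In the shifted coordinates `x_{M+P(i),i}` the forms `β` and the boxes take the
same shape for every adapted `ι`. Comparing coefficients, `S_k` either fixes the tableau of `B` or
moves it along an arrow of the crystal graph of colour `ι_k`, forwards or backwards, keeping the
starting level `s` and the parity of `#B`. Conversely every `B` other than the highest weights `∅`
and `{n}`, whose tableaux are the coordinates `x_{r,n}` and `x_{r,n-1}`, is the target of an arrow,
and the lower bound on `s` keeps all occurrence numbers met on the way positive.
-/

/-! ### The operators `S_k` -/

section Sop

variable {A : ℕ → ℕ → ℤ} {ι : ℕ → ℕ} {k : ℕ} {φ : ℕ → ℚ}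

lemma beta_zero : beta A ι 0 = 0 := if_pos rfl

lemma Sop_of_apply_eq_zero (h : φ k = 0) : Sop A ι k φ = φ := by
  rw [Sop, h, if_neg (lt_irrefl _), zero_smul, sub_zero]

lemma Sop_of_apply_eq_one (h : φ k = 1) : Sop A ι k φ = φ - beta A ι k := by
  rw [Sop, h, if_pos one_pos, one_smul]

lemma Sop_of_apply_eq_neg_one (h : φ k = -1) : Sop A ι k φ = φ + beta A ι (kminus ι k) := by
  rw [Sop, h, if_neg (by norm_num), neg_one_smul, sub_neg_eq_add]

end Sop

/-! ### Occurrences of a letter -/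

section Occurrences

variable {n : ℕ} {ι : ℕ → ℕ} {i j : ℕ}

lemma Admissible.infinite_letter (h : Admissible n ι) (hi : 1 ≤ i) (hin : i ≤ n) :
    {k | ι k = i}.Infinite :=
  Set.infinite_of_forall_exists_gt fun N =>
    let ⟨k, hk, hki⟩ := h.2.2 i hi hin (N + 1)
    ⟨k, hki, hk⟩

lemma occPos_eq_nth (hi : {k | ι k = i}.Infinite) (m : ℕ) :
    occPos ι i m = Nat.nth (fun k => k = 0 ∨ ι k = i) m := by
  have hinf : {k | k = 0 ∨ ι k = i}.Infinite := hi.mono fun _ => Or.inr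
  have hmono := Nat.nth_strictMono hinf
  induction m with
  | zero => exact (Nat.nth_zero_of_zero (Or.inl rfl)).symm
  | succ m ih =>
    rw [Nat.nth_eq_sInf, occPos, ih]
    refine congrArg sInf (Set.ext fun k => ⟨?_, ?_⟩)
    · rintro ⟨hk, hki⟩
      exact ⟨Or.inr hki, fun l hl => (hmono.monotone (Nat.le_of_lt_succ hl)).trans_lt hk⟩
    · rintro ⟨rfl | hki, hk⟩
      · exact absurd (hk m m.lt_succ_self) (Nat.not_lt_zero _)
      · exact ⟨hk m m.lt_succ_self, hki⟩

lemma occPos_strictMono (hi : {k | ι k = i}.Infinite) : StrictMono (occPos ι i) := by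
  rw [funext (occPos_eq_nth hi)]
  exact Nat.nth_strictMono (hi.mono fun _ => Or.inr)

lemma occPos_pos (hi : {k | ι k = i}.Infinite) {m : ℕ} (hm : 1 ≤ m) : 1 ≤ occPos ι i m :=
  Nat.pos_of_ne_zero ((occPos_strictMono hi).injective.ne (a₂ := 0) (Nat.ne_of_gt hm))

lemma apply_occPos (hi : {k | ι k = i}.Infinite) {m : ℕ} (hm : 1 ≤ m) :
    ι (occPos ι i m) = i := by
  have hmem := Nat.nth_mem_of_infinite (p := fun k => k = 0 ∨ ι k = i)
    (hi.mono fun _ => Or.inr) m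
  rw [← occPos_eq_nth hi] at hmem
  exact hmem.resolve_left (Nat.ne_of_gt (occPos_pos hi hm))

lemma exists_occPos_eq {k : ℕ} (hk : 1 ≤ k) (hi : {l | ι l = ι k}.Infinite) :
    ∃ m, 1 ≤ m ∧ occPos ι (ι k) m = k := by
  have hmem : k ∈ Set.range (Nat.nth fun l => l = 0 ∨ ι l = ι k) := by
    rw [Nat.range_nth_of_infinite (p := fun l => l = 0 ∨ ι l = ι k) (hi.mono fun _ => Or.inr)]
    exact Or.inr rfl
  rw [← funext (occPos_eq_nth hi)] at hmem
  obtain ⟨m, hm⟩ := hmem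
  refine ⟨m, Nat.pos_of_ne_zero ?_, hm⟩
  rintro rfl
  exact Nat.ne_of_gt hk hm.symm

lemma occPos_eq_occPos_iff (hi : {k | ι k = i}.Infinite) (hj : {k | ι k = j}.Infinite)
    {m t : ℕ} (hm : 1 ≤ m) (ht : 1 ≤ t) : occPos ι i m = occPos ι j t ↔ i = j ∧ m = t := by
  refine ⟨fun h => ?_, fun ⟨hij, hmt⟩ => hij ▸ hmt ▸ rfl⟩
  have hij : i = j := by rw [← apply_occPos hi hm, h, apply_occPos hj ht]
  subst hij
  exact ⟨rfl, (occPos_strictMono hi).injective h⟩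

lemma apply_ne_of_lt_occPos_succ {m k : ℕ} (hk : occPos ι i m < k)
    (hk' : k < occPos ι i (m + 1)) : ι k ≠ i :=
  fun hki => Nat.notMem_of_lt_sInf hk' ⟨hk, hki⟩

lemma kplus_occPos (hi : {k | ι k = i}.Infinite) {m : ℕ} (hm : 1 ≤ m) :
    kplus ι (occPos ι i m) = occPos ι i (m + 1) := by
  rw [kplus, apply_occPos hi hm, occPos]

lemma kminus_occPos_succ (hi : {k | ι k = i}.Infinite) (m : ℕ) :
    kminus ι (occPos ι i (m + 1)) = occPos ι i m := by
  have hle : ∀ l ∈ {l | 0 < l ∧ l < occPos ι i (m + 1) ∧ ι l = ι (occPos ι i (m + 1))},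
      l ≤ occPos ι i m := by
    rintro l ⟨-, hl, hli⟩
    rw [apply_occPos hi m.succ_pos] at hli
    exact not_lt.1 fun hlt => apply_ne_of_lt_occPos_succ hlt hl hli
  rcases m.eq_zero_or_pos with rfl | hm
  · exact Nat.le_zero.1 (csSup_le' hle)
  · refine IsGreatest.csSup_eq ⟨⟨occPos_pos hi hm, occPos_strictMono hi m.lt_succ_self, ?_⟩, hle⟩
    rw [apply_occPos hi hm, apply_occPos hi m.succ_pos]

lemma pval_eq (i j : ℕ) : pval ι i j = if occPos ι i 1 < occPos ι j 1 then 1 else 0 := rfl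

lemma pval_le_one (i j : ℕ) : pval ι i j ≤ 1 := by
  rw [pval]
  split_ifs <;> omega

lemma pval_add_pval (hi : {k | ι k = i}.Infinite) (hj : {k | ι k = j}.Infinite) (hij : i ≠ j) :
    pval ι i j + pval ι j i = 1 := by
  have hne : occPos ι i 1 ≠ occPos ι j 1 := fun h =>
    hij ((occPos_eq_occPos_iff hi hj le_rfl le_rfl).1 h).1
  simp only [pval_eq]
  split_ifs <;> omega

end Occurrences

/-! ### Alternating letters -/

section Alternation

variable {ι : ℕ → ℕ} {i j : ℕ}

/-- The occurrences of `i` and `j` in `ι` alternate: two occurrences of these letters with none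
of them in between carry different letters. This is the condition which `Adapted` imposes on
letters with nonzero Cartan integer. -/
def Alternating (ι : ℕ → ℕ) (i j : ℕ) : Prop :=
  ∀ k l, 1 ≤ k → k < l → (ι k = i ∨ ι k = j) → (ι l = i ∨ ι l = j) →
    (∀ m, k < m → m < l → ι m ≠ i ∧ ι m ≠ j) → ι k ≠ ι l

namespace Alternating

lemma symm (h : Alternating ι i j) : Alternating ι j i := fun k l hk hkl hki hli hgap =>
  h k l hk hkl hki.symm hli.symm fun m hm hm' => (hgap m hm hm').symm

lemma ne (h : Alternating ι i j) (hi : {k | ι k = i}.Infinite) : i ≠ j := by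
  rintro rfl
  have h₁ := apply_occPos hi le_rfl
  have h₂ := apply_occPos hi one_le_two
  exact h _ _ (occPos_pos hi le_rfl) (occPos_strictMono hi one_lt_two) (.inl h₁) (.inl h₂)
    (fun m hm hm' => and_self_iff.2 (apply_ne_of_lt_occPos_succ hm hm')) (h₁.trans h₂.symm)

lemma occPos_succ_lt (h : Alternating ι i j) (hi : {k | ι k = i}.Infinite) {m t : ℕ}
    (hm : 1 ≤ m) (htm : occPos ι j t < occPos ι i m) :
    occPos ι j (t + 1) < occPos ι i (m + 1) := by
  by_contra! hle
  have h₁ := apply_occPos hi hm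
  have h₂ := apply_occPos hi m.succ_pos
  exact h _ _ (occPos_pos hi hm) (occPos_strictMono hi m.lt_succ_self) (.inl h₁) (.inl h₂)
    (fun k hk hk' => ⟨apply_ne_of_lt_occPos_succ hk hk',
      apply_ne_of_lt_occPos_succ (htm.trans hk) (hk'.trans_le hle)⟩) (h₁.trans h₂.symm)

lemma interleave (h : Alternating ι i j) (hi : {k | ι k = i}.Infinite)
    (hj : {k | ι k = j}.Infinite) (hij : occPos ι i 1 < occPos ι j 1) (m : ℕ) :
    occPos ι j m < occPos ι i (m + 1) ∧ occPos ι i (m + 1) < occPos ι j (m + 1) := by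
  induction m with
  | zero => exact ⟨occPos_pos hi le_rfl, hij⟩
  | succ m ih =>
    exact ⟨h.occPos_succ_lt hi m.succ_pos ih.1, h.symm.occPos_succ_lt hj m.succ_pos ih.2⟩

lemma occPos_lt_occPos_iff (h : Alternating ι i j) (hi : {k | ι k = i}.Infinite)
    (hj : {k | ι k = j}.Infinite) {m t : ℕ} (hm : 1 ≤ m) :
    occPos ι i m < occPos ι j t ↔ m + pval ι j i ≤ t := by
  obtain ⟨m, rfl⟩ := Nat.exists_eq_add_of_le' hm
  suffices hc : occPos ι j (m + pval ι j i) < occPos ι i (m + 1) ∧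
      occPos ι i (m + 1) < occPos ι j (m + pval ι j i + 1) by
    rw [Nat.add_right_comm]
    refine ⟨fun hlt => Nat.succ_le_of_lt ?_, fun hle =>
      hc.2.trans_le ((occPos_strictMono hj).monotone hle)⟩
    exact (occPos_strictMono hj).lt_iff_lt.1 (hc.1.trans hlt)
  rcases lt_trichotomy (occPos ι i 1) (occPos ι j 1) with hij | hij | hij
  · rw [pval_eq, if_neg hij.not_gt]
    exact h.interleave hi hj hij m
  · exact absurd ((occPos_eq_occPos_iff hi hj le_rfl le_rfl).1 hij).1 (h.ne hi)
  · rw [pval_eq, if_pos hij]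
    exact ⟨(h.symm.interleave hj hi hij m).2, (h.symm.interleave hj hi hij (m + 1)).1⟩

lemma occPos_mem_Ioo_iff (h : Alternating ι i j) (hi : {k | ι k = i}.Infinite)
    (hj : {k | ι k = j}.Infinite) {m t : ℕ} (hm : 1 ≤ m) :
    occPos ι j t ∈ Finset.Ioo (occPos ι i m) (occPos ι i (m + 1)) ↔ t = m + pval ι j i := by
  have hpt := h.occPos_lt_occPos_iff hi hj (t := t) hm
  have hpt' := h.occPos_lt_occPos_iff hi hj (t := t) (Nat.le_add_left 1 m)
  have hne : 1 ≤ t → occPos ι i (m + 1) ≠ occPos ι j t := fun ht he =>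
    h.ne hi ((occPos_eq_occPos_iff hi hj m.succ_pos ht).1 he).1
  rw [Finset.mem_Ioo]
  omega

end Alternating

end Alternation

/-! ### The forms `β` of an adapted sequence -/

section Beta

variable {n : ℕ} {A : ℕ → ℕ → ℤ} {ι : ℕ → ℕ} {i j : ℕ}

lemma Adapted.alternating (h : Adapted n A ι) (hi : 1 ≤ i) (hin : i ≤ n) (hj : 1 ≤ j)
    (hjn : j ≤ n) (hij : i ≠ j) (hA : A i j ≠ 0) : Alternating ι i j :=
  h i j hi hin hj hjn hij hA

lemma Alternating.filter_Ioo_eq_singleton (h : Alternating ι i j) (hi : {k | ι k = i}.Infinite)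
    (hj : {k | ι k = j}.Infinite) {m : ℕ} (hm : 1 ≤ m) :
    (Finset.Ioo (occPos ι i m) (occPos ι i (m + 1))).filter (fun k => ι k = j) =
      {occPos ι j (m + pval ι j i)} := by
  ext k
  rw [Finset.mem_filter, Finset.mem_singleton]
  constructor
  · rintro ⟨hk, rfl⟩
    obtain ⟨t, -, ht⟩ := exists_occPos_eq (Nat.one_le_of_lt (Finset.mem_Ioo.1 hk).1) hj
    rw [← ht, h.occPos_mem_Ioo_iff hi hj hm] at hk
    rw [← hk, ht]
  · rintro rfl
    exact ⟨(h.occPos_mem_Ioo_iff hi hj hm).2 rfl, apply_occPos hj (hm.trans (m.le_add_right _))⟩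

lemma beta_occPos (hadm : Admissible n ι) (hadap : Adapted n A ι) (hi : 1 ≤ i) (hin : i ≤ n)
    {m : ℕ} (hm : 1 ≤ m) :
    beta A ι (occPos ι i m) = xc (occPos ι i m) + xc (occPos ι i (m + 1)) +
      ∑ j ∈ (Finset.Icc 1 n).erase i, (A i j : ℚ) • xc (occPos ι j (m + pval ι j i)) := by
  have hinf := hadm.infinite_letter hi hin
  have hmaps : ∀ k ∈ Finset.Ioo (occPos ι i m) (occPos ι i (m + 1)),
      ι k ∈ (Finset.Icc 1 n).erase i := by
    intro k hk
    obtain ⟨hk, hk'⟩ := Finset.mem_Ioo.1 hk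
    exact Finset.mem_erase.2 ⟨apply_ne_of_lt_occPos_succ hk hk',
      Finset.mem_Icc.2 (hadm.1 k (Nat.one_le_of_lt hk))⟩
  rw [beta, if_neg (Nat.ne_of_gt (occPos_pos hinf hm)), kplus_occPos hinf hm,
    apply_occPos hinf hm, add_right_comm, ← Finset.sum_fiberwise_of_maps_to hmaps]
  congr 1
  refine Finset.sum_congr rfl fun j hj => ?_
  obtain ⟨hji, hj⟩ := Finset.mem_erase.1 hj
  obtain ⟨hj, hjn⟩ := Finset.mem_Icc.1 hj
  have hfib : ∀ k ∈ (Finset.Ioo (occPos ι i m) (occPos ι i (m + 1))).filter (fun k => ι k = j),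
      (A i (ι k) : ℚ) • xc k = (A i j : ℚ) • xc k := fun k hk => by
    rw [(Finset.mem_filter.1 hk).2]
  rw [Finset.sum_congr rfl hfib]
  rcases eq_or_ne (A i j) 0 with hA | hA
  · simp only [hA, Int.cast_zero, zero_smul, Finset.sum_const_zero]
  · rw [(hadap.alternating hi hin hj hjn hji.symm hA).filter_Ioo_eq_singleton hinf
      (hadm.infinite_letter hj hjn) hm, Finset.sum_singleton]

end Beta

/-! ### Shifted coordinates in type D -/

section ShiftedCoordinates

variable {n : ℕ} {ι : ℕ → ℕ} {i j : ℕ}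

lemma cartanD_of_ne (hi : 1 ≤ i) (hin : i ≤ n) (hj : 1 ≤ j) (hjn : j ≤ n) (hij : i ≠ j) :
    cartanD n i j = if (i + 1 = j ∧ j < n) ∨ (j + 1 = i ∧ i < n) ∨
      (i + 2 = n ∧ j = n) ∨ (j + 2 = n ∧ i = n) then -1 else 0 := by
  rw [cartanD, if_neg hij]
  split_ifs <;> first | rfl | omega

lemma cartanD_comm (hi : 1 ≤ i) (hin : i ≤ n) (hj : 1 ≤ j) (hjn : j ≤ n) :
    cartanD n i j = cartanD n j i := by
  rcases eq_or_ne i j with rfl | hij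
  · rfl
  · rw [cartanD_of_ne hi hin hj hjn hij, cartanD_of_ne hj hjn hi hin hij.symm]
    congr 1
    exact propext (by omega)

lemma PD_succ (hi : 1 ≤ i) (hin : i + 1 < n) :
    PD ι n (i + 1) = PD ι n i + pval ι (i + 1) i := by
  rw [PD, PD, if_neg (by omega), if_pos (by omega), if_neg (by omega), if_pos (by omega),
    Finset.sum_Icc_succ_top (by omega), Nat.add_sub_cancel]

lemma PD_self (hn : 2 ≤ n) : PD ι n n = PD ι n (n - 2) + pval ι n (n - 2) := by
  rw [PD, PD, if_pos rfl, if_neg (by omega), if_pos (by omega)]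

lemma PD_eq_add_pval (hi : 1 ≤ i) (hij : i < j) (hjn : j ≤ n) (hA : cartanD n i j ≠ 0) :
    PD ι n j = PD ι n i + pval ι j i := by
  rw [cartanD_of_ne hi (by omega) (by omega) hjn hij.ne, ite_ne_right_iff] at hA
  rcases hA.1 with ⟨rfl, hjn⟩ | h | ⟨h, rfl⟩ | h
  · exact PD_succ hi hjn
  · omega
  · obtain rfl : i = j - 2 := by omega
    exact PD_self (by omega)
  · omega

/-- The coordinate `x_{M + P(i), i}`. After this shift of the first index the forms `β` and the
boxes of type D no longer depend on `ι`. -/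
noncomputable def coordD (ι : ℕ → ℕ) (n : ℕ) (M : ℤ) (i : ℕ) : ℕ → ℚ := xsj ι n (M + PD ι n i) i

lemma coordD_zero (M : ℤ) : coordD ι n M 0 = 0 :=
  if_neg fun h => absurd h.2.1 (by omega)

lemma coordD_eq_xc {M : ℤ} {m : ℕ} (hi : 1 ≤ i) (hin : i ≤ n) (hm : 1 ≤ m)
    (hM : M + PD ι n i = m) : coordD ι n M i = xc (occPos ι i m) := by
  rw [coordD, xsj, hM, if_pos ⟨by omega, hi, hin⟩, Int.toNat_natCast]

lemma coordD_apply_occPos (hadm : Admissible n ι) (M : ℤ) (hj : 1 ≤ j) (hjn : j ≤ n) {m : ℕ}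
    (hm : 1 ≤ m) :
    coordD ι n M i (occPos ι j m) = if i = j ∧ M + PD ι n i = m then 1 else 0 := by
  rw [coordD, xsj]
  split_ifs with h h' h'
  · rw [xc, if_pos]
    rw [h'.2, h'.1, Int.toNat_natCast]
  · rw [xc, if_neg]
    rw [occPos_eq_occPos_iff (hadm.infinite_letter hj hjn) (hadm.infinite_letter h.2.1 h.2.2) hm
      (by omega)]
    omega
  · obtain ⟨rfl, h'⟩ := h'
    omega
  · rfl

lemma beta_cartanD (hadm : Admissible n ι) (hadap : Adapted n (cartanD n) ι) (hi : 1 ≤ i)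
    (hin : i ≤ n) {m : ℕ} (hm : 1 ≤ m) {M : ℤ} (hM : M + PD ι n i = m) :
    beta (cartanD n) ι (occPos ι i m) = coordD ι n M i + coordD ι n (M + 1) i +
      ∑ j ∈ (Finset.Icc 1 n).erase i,
        (cartanD n i j : ℚ) • coordD ι n (if i < j then M else M + 1) j := by
  rw [beta_occPos hadm hadap hi hin hm, coordD_eq_xc hi hin hm hM,
    coordD_eq_xc hi hin m.succ_pos (by omega)]
  congr 1
  refine Finset.sum_congr rfl fun j hj => ?_
  obtain ⟨hji, hj⟩ := Finset.mem_erase.1 hj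
  obtain ⟨hj, hjn⟩ := Finset.mem_Icc.1 hj
  rcases eq_or_ne (cartanD n i j) 0 with hA | hA
  · rw [hA, Int.cast_zero, zero_smul, zero_smul]
  · rw [coordD_eq_xc (m := m + pval ι j i) hj hjn (by omega)]
    rcases hji.lt_or_gt with hlt | hlt
    · have hP := PD_eq_add_pval (ι := ι) hj hlt hin (cartanD_comm hi hin hj hjn ▸ hA)
      have hp := pval_add_pval (hadm.infinite_letter hj hjn) (hadm.infinite_letter hi hin) hji
      rw [if_neg hlt.not_gt]
      omega
    · have hP := PD_eq_add_pval (ι := ι) hi hlt hjn hA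
      rw [if_pos hlt]
      omega

lemma beta_cartanD_of_lt (hadm : Admissible n ι) (hadap : Adapted n (cartanD n) ι) (hi : 1 ≤ i)
    (hin : i < n) {m : ℕ} (hm : 1 ≤ m) {M : ℤ} (hM : M + PD ι n i = m) :
    beta (cartanD n) ι (occPos ι i m) =
      coordD ι n M i + coordD ι n (M + 1) i - coordD ι n (M + 1) (i - 1)
        - (if i + 1 < n then coordD ι n M (i + 1) else 0)
        - (if i + 2 = n then coordD ι n M n else 0) := by
  have hterm : ∀ j ∈ (Finset.Icc 1 n).erase i,
      (cartanD n i j : ℚ) • coordD ι n (if i < j then M else M + 1) j =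
        -(if j = i - 1 then coordD ι n (M + 1) j else 0)
          - (if j = i + 1 then if i + 1 < n then coordD ι n M j else 0 else 0)
          - (if j = n then if i + 2 = n then coordD ι n M j else 0 else 0) := by
    intro j hj
    obtain ⟨hji, hj⟩ := Finset.mem_erase.1 hj
    obtain ⟨hj, hjn⟩ := Finset.mem_Icc.1 hj
    rw [cartanD_of_ne hi hin.le hj hjn hji.symm]
    split_ifs <;> first | omega | simp
  have hsucc : i + 1 ∈ (Finset.Icc 1 n).erase i := by
    rw [Finset.mem_erase, Finset.mem_Icc]
    omega
  have hlast : n ∈ (Finset.Icc 1 n).erase i := by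
    rw [Finset.mem_erase, Finset.mem_Icc]
    omega
  have hlow : (if i - 1 ∈ (Finset.Icc 1 n).erase i then coordD ι n (M + 1) (i - 1) else 0) =
      coordD ι n (M + 1) (i - 1) := by
    rcases hi.eq_or_lt with rfl | hi
    · rw [coordD_zero, ite_self]
    · exact if_pos (by rw [Finset.mem_erase, Finset.mem_Icc]; omega)
  rw [beta_cartanD hadm hadap hi hin.le hm hM, Finset.sum_congr rfl hterm,
    Finset.sum_sub_distrib, Finset.sum_sub_distrib, Finset.sum_neg_distrib, Finset.sum_ite_eq',
    Finset.sum_ite_eq_of_mem' _ _ _ hsucc, Finset.sum_ite_eq_of_mem' _ _ _ hlast, hlow]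
  abel

lemma beta_cartanD_self (hadm : Admissible n ι) (hadap : Adapted n (cartanD n) ι) (hn : 3 ≤ n)
    {m : ℕ} (hm : 1 ≤ m) {M : ℤ} (hM : M + PD ι n n = m) :
    beta (cartanD n) ι (occPos ι n m) =
      coordD ι n M n + coordD ι n (M + 1) n - coordD ι n (M + 1) (n - 2) := by
  rw [beta_cartanD hadm hadap (by omega) le_rfl hm hM, Finset.sum_eq_single (n - 2),
    cartanD_of_ne (by omega) le_rfl (by omega) (by omega) (by omega), if_pos (by omega),
    if_neg (by omega), Int.cast_neg, Int.cast_one, neg_one_smul, sub_eq_add_neg]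
  · intro j hj hjn
    rw [Finset.mem_erase, Finset.mem_Icc] at hj
    rw [cartanD_of_ne (by omega) le_rfl hj.2.1 hj.2.2 hj.1.symm, if_neg (by omega),
      Int.cast_zero, zero_smul]
  · intro hmem
    rw [Finset.mem_erase, Finset.mem_Icc] at hmem
    omega

end ShiftedCoordinates

/-! ### Barred boxes -/

section BarredBoxes

variable {n : ℕ} {ι : ℕ → ℕ} {i b : ℕ}

lemma boxD_zero (s : ℤ) : boxD ι n s 0 = coordD ι n s n := if_pos rfl

lemma boxD_bar (hb : 1 ≤ b) (hbn : b ≤ n) (s : ℤ) :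
    boxD ι n s (2 * n + 1 - b) =
      coordD ι n (s + n - b) (b - 1) - (if b < n then coordD ι n (s + n - b) b else 0)
        - (if n ≤ b + 1 then coordD ι n (s + 1) n else 0) := by
  have hcases : b = n ∨ b + 1 = n ∨ b + 2 ≤ n := by omega
  rw [boxD, if_neg (by omega), if_neg (by omega), if_neg (by omega), if_neg (by omega)]
  simp only [coordD]
  rcases hcases with rfl | rfl | hbn
  · rw [if_pos (by omega), if_neg (by omega), if_pos (by omega), sub_zero]
    congr 2 <;> ring
  · rw [if_neg (by omega), if_pos (by omega), if_pos (by omega), if_pos (by omega),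
      Nat.add_sub_cancel, show b + 1 - 2 = b - 1 by omega]
    congr 2 <;> [congr 1; congr 1; skip] <;> push_cast <;> ring
  · rw [if_neg (by omega), if_neg (by omega), if_pos (by omega), if_neg (by omega), sub_zero,
      show 2 * n - (2 * n + 1 - b) = b - 1 by omega,
      show 2 * n + 1 - (2 * n + 1 - b) = b by omega]
    congr 2 <;> ring

lemma boxD_bar_eq_sub_beta (hadm : Admissible n ι) (hadap : Adapted n (cartanD n) ι)
    (hi : 1 ≤ i) (hin : i < n) {m : ℕ} (hm : 1 ≤ m) {s : ℤ}
    (hs : s + n - (i + 1) + PD ι n i = m) :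
    boxD ι n s (2 * n + 1 - i) =
      boxD ι n s (2 * n + 1 - (i + 1)) - beta (cartanD n) ι (occPos ι i m) := by
  rw [boxD_bar hi hin.le, boxD_bar (b := i + 1) (by omega) hin,
    beta_cartanD_of_lt hadm hadap hi hin hm hs, Nat.add_sub_cancel, if_pos hin, Nat.cast_succ,
    show s + n - (i + 1) + 1 = s + n - i by ring]
  have hcases : i + 1 = n ∨ i + 2 = n ∨ i + 2 < n := by omega
  rcases hcases with h | h | h
  · rw [if_pos (by omega), if_neg (by omega), if_pos (by omega), if_neg (by omega)]
    abel
  · rw [if_neg (by omega), if_pos (by omega), if_pos (by omega), if_pos (by omega),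
      show s + n - (i + 1) = s + 1 by omega]
    abel
  · rw [if_neg (by omega), if_pos (by omega), if_neg (by omega), if_neg (by omega)]
    abel

lemma boxD_add_boxD_bar_add_boxD_bar (hadm : Admissible n ι) (hadap : Adapted n (cartanD n) ι)
    (hn : 3 ≤ n) {m : ℕ} (hm : 1 ≤ m) {s : ℤ} (hs : s + PD ι n n = m) :
    boxD ι n (s + 2) 0 + boxD ι n s (2 * n + 1 - (n - 1)) + boxD ι n (s + 1) (2 * n + 1 - n) =
      boxD ι n s 0 - beta (cartanD n) ι (occPos ι n m) := by
  rw [boxD_zero, boxD_zero, boxD_bar (by omega) (by omega), boxD_bar (by omega) le_rfl,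
    beta_cartanD_self hadm hadap hn hm hs, if_pos (by omega), if_pos (by omega),
    if_neg (lt_irrefl n), if_pos n.le_succ, Nat.sub_sub,
    show s + n - ((n - 1 : ℕ) : ℤ) = s + 1 by omega, add_sub_cancel_right,
    show s + 1 + 1 = s + 2 by ring]
  abel

lemma boxD_bar_apply_occPos_of_lt (hadm : Admissible n ι) (hb : 1 ≤ b) (hbn : b ≤ n)
    (hi : 1 ≤ i) (hin : i < n) {m : ℕ} (hm : 1 ≤ m) (s : ℤ) :
    boxD ι n s (2 * n + 1 - b) (occPos ι i m) =
      (if b = i + 1 then if s + n - (i + 1) + PD ι n i = m then 1 else 0 else 0)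
        - (if b = i then if s + n - i + PD ι n i = m then 1 else 0 else 0) := by
  simp only [boxD_bar hb hbn, Pi.sub_apply, ite_apply, Pi.zero_apply,
    coordD_apply_occPos hadm _ hi hin.le hm]
  rcases eq_or_ne b (i + 1) with rfl | hbi
  · simp only [Nat.add_sub_cancel, Nat.cast_succ, true_and, if_true]
    split_ifs <;> first | omega | simp
  · rw [if_neg hbi]
    rcases eq_or_ne b i with rfl | hbi' <;> split_ifs <;> first | omega | simp

lemma boxD_bar_apply_occPos_self (hadm : Admissible n ι) (hb : 1 ≤ b) (hbn : b ≤ n) {m : ℕ}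
    (hm : 1 ≤ m) (s : ℤ) :
    boxD ι n s (2 * n + 1 - b) (occPos ι n m) =
      -(if n ≤ b + 1 then if s + 1 + PD ι n n = m then 1 else 0 else 0) := by
  simp only [boxD_bar hb hbn, Pi.sub_apply, ite_apply, Pi.zero_apply,
    coordD_apply_occPos hadm _ (hb.trans hbn) le_rfl hm, true_and]
  split_ifs <;> first | omega | simp

end BarredBoxes

/-! ### Spin tableaux and crystal arrows -/

section SpinTableaux

open Finset

variable {n : ℕ} {ι : ℕ → ℕ} {i : ℕ} {B C : Finset ℕ}

lemma count_mem_insert {a : ℕ} (ha : a ∉ B) (b : ℕ) :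
    Nat.count (· ∈ insert a B) b = Nat.count (· ∈ B) b + if a < b then 1 else 0 := by
  induction b with
  | zero => rfl
  | succ b ih =>
    rw [Nat.count_succ, Nat.count_succ, ih]
    simp only [mem_insert]
    rcases eq_or_ne b a with rfl | hba
    · simp [ha]
    · split_ifs <;> first | omega | simp_all

lemma count_mem_eq_card {N : ℕ} (hB : ∀ b ∈ B, b < N) : Nat.count (· ∈ B) N = #B := by
  rw [Nat.count_eq_card_filter_range, filter_mem_eq_inter, inter_eq_right.2]
  exact fun b hb => mem_range.2 (hB b hb)

/-- The column tableau of type D with first entry `ovl(n+1)` and remaining entries `b̄`, `b ∈ B`.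
The entry `b̄` lies `Nat.count (· ∈ B) b` rows above the bottom of the column, because barred
letters decrease with `b`. Subsets of `{1, …, n}` index the weights of the two half-spin
representations, the parity of `#B` telling them apart. -/
noncomputable def spinTab (ι : ℕ → ℕ) (n : ℕ) (s : ℤ) (B : Finset ℕ) : ℕ → ℚ :=
  boxD ι n (s + #B) 0 + ∑ b ∈ B, boxD ι n (s + Nat.count (· ∈ B) b) (2 * n + 1 - b)

lemma spinTab_insert_eq_sub_beta (hadm : Admissible n ι) (hadap : Adapted n (cartanD n) ι)
    (hi : 1 ≤ i) (hin : i < n) (h : i ∉ C) (h' : i + 1 ∉ C) {m : ℕ} (hm : 1 ≤ m) {s : ℤ}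
    (hs : s + (Nat.count (· ∈ C) i + (n - (i + 1)) : ℕ) + PD ι n i = m) :
    spinTab ι n s (insert i C) =
      spinTab ι n s (insert (i + 1) C) - beta (cartanD n) ι (occPos ι i m) := by
  have hsum : ∑ b ∈ C, boxD ι n (s + Nat.count (· ∈ insert i C) b) (2 * n + 1 - b) =
      ∑ b ∈ C, boxD ι n (s + Nat.count (· ∈ insert (i + 1) C) b) (2 * n + 1 - b) := by
    refine sum_congr rfl fun b hb => ?_
    have hbi : b ≠ i + 1 := ne_of_mem_of_not_mem hb h'
    simp only [count_mem_insert h, count_mem_insert h', show i < b ↔ i + 1 < b by omega]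
  rw [spinTab, spinTab, sum_insert h, sum_insert h', card_insert_of_notMem h,
    card_insert_of_notMem h', hsum, count_mem_insert h, count_mem_insert h',
    if_neg (lt_irrefl _), if_neg (lt_irrefl _), Nat.count_succ, if_neg h]
  simp only [Nat.add_zero]
  rw [boxD_bar_eq_sub_beta hadm hadap hi hin hm (s := s + Nat.count (· ∈ C) i) (by omega)]
  abel

lemma spinTab_insert_insert_eq_sub_beta (hadm : Admissible n ι)
    (hadap : Adapted n (cartanD n) ι) (hn : 3 ≤ n) (hC : ∀ b ∈ C, b < n - 1) {m : ℕ}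
    (hm : 1 ≤ m) {s : ℤ} (hs : s + #C + PD ι n n = m) :
    spinTab ι n s (insert n (insert (n - 1) C)) =
      spinTab ι n s C - beta (cartanD n) ι (occPos ι n m) := by
  have h : n - 1 ∉ C := fun hmem => lt_irrefl _ (hC _ hmem)
  have h' : n ∉ insert (n - 1) C := by
    rw [mem_insert]
    exact not_or.2 ⟨by omega, fun hmem => absurd (hC _ hmem) (by omega)⟩
  have hcount (b : ℕ) : Nat.count (· ∈ insert n (insert (n - 1) C)) b =
      Nat.count (· ∈ C) b + (if n - 1 < b then 1 else 0) + if n < b then 1 else 0 := by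
    rw [count_mem_insert h', count_mem_insert h]
  have hsum : ∑ b ∈ C, boxD ι n (s + Nat.count (· ∈ insert n (insert (n - 1) C)) b)
      (2 * n + 1 - b) = ∑ b ∈ C, boxD ι n (s + Nat.count (· ∈ C) b) (2 * n + 1 - b) := by
    refine sum_congr rfl fun b hb => ?_
    have hbn := hC b hb
    rw [hcount, if_neg (by omega), if_neg (by omega), Nat.add_zero, Nat.add_zero]
  have hbox := boxD_add_boxD_bar_add_boxD_bar hadm hadap hn hm hs
  rw [spinTab, spinTab, sum_insert h', sum_insert h, card_insert_of_notMem h',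
    card_insert_of_notMem h, hsum, hcount, hcount, count_mem_eq_card hC,
    count_mem_eq_card fun b hb => (hC b hb).trans_le (n.sub_le 1), if_pos (by omega),
    if_neg (by omega), if_neg (by omega), if_neg (by omega)]
  simp only [Nat.add_zero, Nat.cast_add, Nat.cast_one, ← add_assoc]
  rw [add_sub_right_comm, ← hbox, show s + #C + 1 + 1 = s + #C + 2 by ring]
  abel

lemma spinTab_apply_occPos_of_lt (hadm : Admissible n ι) (hB : B ⊆ Icc 1 n) (hi : 1 ≤ i)
    (hin : i < n) {m : ℕ} (hm : 1 ≤ m) (s : ℤ) :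
    spinTab ι n s B (occPos ι i m) =
      (if i + 1 ∈ B then
        if s + Nat.count (· ∈ B) (i + 1) + n - (i + 1) + PD ι n i = m then 1 else 0 else 0)
      - (if i ∈ B then
        if s + Nat.count (· ∈ B) i + n - i + PD ι n i = m then 1 else 0 else 0) := by
  rw [spinTab, Pi.add_apply, Finset.sum_apply, boxD_zero, coordD_apply_occPos hadm _ hi hin.le hm,
    if_neg (by omega), zero_add, sum_congr rfl fun b hb => boxD_bar_apply_occPos_of_lt hadm
      (mem_Icc.1 (hB hb)).1 (mem_Icc.1 (hB hb)).2 hi hin hm _,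
    sum_sub_distrib, sum_ite_eq', sum_ite_eq']
lemma spinTab_apply_occPos_self (hadm : Admissible n ι) (hn : 2 ≤ n) (hB : B ⊆ Icc 1 n) {m : ℕ}
    (hm : 1 ≤ m) (s : ℤ) :
    spinTab ι n s B (occPos ι n m) =
      (if s + #B + PD ι n n = m then 1 else 0)
      - (if n - 1 ∈ B then
        if s + Nat.count (· ∈ B) (n - 1) + 1 + PD ι n n = m then 1 else 0 else 0)
      - (if n ∈ B then
        if s + Nat.count (· ∈ B) n + 1 + PD ι n n = m then 1 else 0 else 0) := by
  have hbox : ∀ b ∈ B, boxD ι n (s + Nat.count (· ∈ B) b) (2 * n + 1 - b) (occPos ι n m) =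
      -(if b = n - 1 then
          if s + Nat.count (· ∈ B) b + 1 + PD ι n n = m then 1 else 0 else 0)
        - (if b = n then
          if s + Nat.count (· ∈ B) b + 1 + PD ι n n = m then 1 else 0 else 0) := by
    intro b hb
    obtain ⟨hb, hbn⟩ := mem_Icc.1 (hB hb)
    rw [boxD_bar_apply_occPos_self hadm hb hbn hm]
    split_ifs <;> first | omega | simp
  rw [spinTab, Pi.add_apply, Finset.sum_apply, boxD_zero,
    coordD_apply_occPos hadm _ (by omega) le_rfl hm, sum_congr rfl hbox, sum_sub_distrib,
    sum_neg_distrib, sum_ite_eq', sum_ite_eq']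
  simp only [true_and]
  ring

/-- The arrows of the crystal graphs of the half-spin representations, on subsets of
`{1, …, n}`: `SpinArrow n i M B B'` is an arrow `B → B'` of colour `i`. The level `M` locates it
in the tableaux: the tableau of `B'` starting at `s` is that of `B` minus `β_k`, where `k` is the
position of the `(s + M + P(i))`-th occurrence of `i`. -/
inductive SpinArrow (n : ℕ) : ℕ → ℕ → Finset ℕ → Finset ℕ → Prop
  | swap {i : ℕ} {C : Finset ℕ} (hi : 1 ≤ i) (hin : i < n) (hC : C ⊆ Icc 1 n) (h : i ∉ C)
      (h' : i + 1 ∉ C) :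
      SpinArrow n i (Nat.count (· ∈ C) i + (n - (i + 1))) (insert (i + 1) C) (insert i C)
  | add {C : Finset ℕ} (hC : C ⊆ Icc 1 (n - 2)) : SpinArrow n n #C C (insert n (insert (n - 1) C))

namespace SpinArrow

variable {M : ℕ} {B' : Finset ℕ}

lemma source_subset (h : SpinArrow n i M B B') : B ⊆ Icc 1 n := by
  rcases h with ⟨hi, hin, hC, -, -⟩ | ⟨hC⟩
  · exact insert_subset (mem_Icc.2 ⟨by omega, hin⟩) hC
  · exact hC.trans (Icc_subset_Icc_right (n.sub_le 2))

lemma target_subset (hn : 2 ≤ n) (h : SpinArrow n i M B B') : B' ⊆ Icc 1 n := by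
  rcases h with ⟨hi, hin, hC, -, -⟩ | ⟨hC⟩
  · exact insert_subset (mem_Icc.2 ⟨hi, hin.le⟩) hC
  · exact insert_subset (mem_Icc.2 ⟨by omega, le_rfl⟩) (insert_subset
      (mem_Icc.2 ⟨by omega, by omega⟩) (hC.trans (Icc_subset_Icc_right (n.sub_le 2))))

lemma colour_mem_Icc (hn : 1 ≤ n) (h : SpinArrow n i M B B') : i ∈ Icc 1 n := by
  rcases h with ⟨hi, hin, -, -, -⟩ | ⟨-⟩
  · exact mem_Icc.2 ⟨hi, hin.le⟩
  · exact mem_Icc.2 ⟨hn, le_rfl⟩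

lemma lt_of_mem_of_subset_Icc_sub_two (hn : 2 ≤ n) (hC : C ⊆ Icc 1 (n - 2)) :
    ∀ b ∈ C, b < n - 1 := fun b hb => by
  have := mem_Icc.1 (hC hb)
  omega

lemma notMem_insert_of_subset_Icc_sub_two (hn : 2 ≤ n) (hC : C ⊆ Icc 1 (n - 2)) :
    n - 1 ∉ C ∧ n ∉ insert (n - 1) C := by
  have hlt := lt_of_mem_of_subset_Icc_sub_two hn hC
  refine ⟨fun h => lt_irrefl _ (hlt _ h), fun h => ?_⟩
  rcases mem_insert.1 h with h | h
  · omega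
  · exact absurd (hlt _ h) (by omega)

lemma card_target_mod_two (hn : 2 ≤ n) (h : SpinArrow n i M B B') : #B' % 2 = #B % 2 := by
  rcases h with ⟨-, -, -, h, h'⟩ | ⟨hC⟩
  · rw [card_insert_of_notMem h, card_insert_of_notMem h']
  · obtain ⟨h, h'⟩ := notMem_insert_of_subset_Icc_sub_two hn hC
    rw [card_insert_of_notMem h', card_insert_of_notMem h, Nat.add_assoc, Nat.add_mod_right]

lemma spinTab_target (hn : 3 ≤ n) (hadm : Admissible n ι) (hadap : Adapted n (cartanD n) ι)
    (h : SpinArrow n i M B B') {m : ℕ} (hm : 1 ≤ m) {s : ℤ} (hs : s + M + PD ι n i = m) :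
    spinTab ι n s B' = spinTab ι n s B - beta (cartanD n) ι (occPos ι i m) := by
  rcases h with ⟨hi, hin, -, h, h'⟩ | ⟨hC⟩
  · exact spinTab_insert_eq_sub_beta hadm hadap hi hin h h' hm hs
  · exact spinTab_insert_insert_eq_sub_beta hadm hadap hn
      (lt_of_mem_of_subset_Icc_sub_two (by omega) hC) hm hs

lemma spinTab_source_apply (hn : 2 ≤ n) (hadm : Admissible n ι) (h : SpinArrow n i M B B')
    {m : ℕ} (hm : 1 ≤ m) (s : ℤ) :
    spinTab ι n s B (occPos ι i m) = if s + M + PD ι n i = m then 1 else 0 := by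
  have hB := h.source_subset
  rcases h with ⟨hi, hin, -, h, h'⟩ | ⟨hC⟩
  · rw [spinTab_apply_occPos_of_lt hadm hB hi hin hm, if_pos (mem_insert_self _ _),
      if_neg (c := i ∈ _) (by simp [h]), sub_zero, count_mem_insert h', if_neg (lt_irrefl _),
      Nat.count_succ, if_neg h]
    congr 1
    exact propext (by omega)
  · obtain ⟨h, h'⟩ := notMem_insert_of_subset_Icc_sub_two hn hC
    rw [spinTab_apply_occPos_self hadm hn hB hm, if_neg (c := n - 1 ∈ _) h,
      if_neg (c := n ∈ _) fun hmem => h' (mem_insert_of_mem hmem), sub_zero, sub_zero]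

lemma spinTab_target_apply (hn : 2 ≤ n) (hadm : Admissible n ι) (h : SpinArrow n i M B B')
    {m : ℕ} (hm : 1 ≤ m) (s : ℤ) :
    spinTab ι n s B' (occPos ι i m) = if s + M + PD ι n i + 1 = m then -1 else 0 := by
  have hB := h.target_subset hn
  rcases h with ⟨hi, hin, -, h, h'⟩ | ⟨hC⟩
  · rw [spinTab_apply_occPos_of_lt hadm hB hi hin hm, if_neg (c := i + 1 ∈ _) (by simp [h']),
      if_pos (mem_insert_self _ _), count_mem_insert h, if_neg (lt_irrefl _)]
    split_ifs <;> first | omega | simp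
  · have hlt := lt_of_mem_of_subset_Icc_sub_two hn hC
    obtain ⟨h, h'⟩ := notMem_insert_of_subset_Icc_sub_two hn hC
    rw [spinTab_apply_occPos_self hadm hn hB hm, if_pos (by simp : n - 1 ∈ _),
      if_pos (mem_insert_self _ _), card_insert_of_notMem h', card_insert_of_notMem h,
      count_mem_insert h', count_mem_insert h', count_mem_insert h, count_mem_insert h,
      count_mem_eq_card hlt, count_mem_eq_card fun b hb => (hlt b hb).trans_le (n.sub_le 1)]
    split_ifs <;> first | omega | simp

lemma exists_target_of_succ_mem (hB : B ⊆ Icc 1 n) (hi : 1 ≤ i) (hin : i < n) (h : i ∉ B)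
    (h' : i + 1 ∈ B) : ∃ M A, SpinArrow n i M B A := by
  have harrow := swap hi hin ((erase_subset (i + 1) B).trans hB)
    (fun hmem => h (mem_of_mem_erase hmem)) (notMem_erase _ _)
  rw [insert_erase h'] at harrow
  exact ⟨_, _, harrow⟩

lemma exists_source_of_succ_notMem (hB : B ⊆ Icc 1 n) (hi : 1 ≤ i) (hin : i < n) (h : i ∈ B)
    (h' : i + 1 ∉ B) : ∃ M A, SpinArrow n i M A B := by
  have harrow := swap hi hin ((erase_subset i B).trans hB) (notMem_erase i B)
    fun hmem => h' (mem_of_mem_erase hmem)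
  rw [insert_erase h] at harrow
  exact ⟨_, _, harrow⟩

lemma exists_target_of_notMem (hB : B ⊆ Icc 1 n) (h : n - 1 ∉ B) (h' : n ∉ B) :
    ∃ M A, SpinArrow n n M B A := by
  refine ⟨_, _, add fun b hb => ?_⟩
  have hbn := mem_Icc.1 (hB hb)
  have hne : b ≠ n - 1 := ne_of_mem_of_not_mem hb h
  have hne' : b ≠ n := ne_of_mem_of_not_mem hb h'
  exact mem_Icc.2 ⟨hbn.1, by omega⟩

lemma exists_source_of_mem (hn : 1 ≤ n) (hB : B ⊆ Icc 1 n) (h : n - 1 ∈ B) (h' : n ∈ B) :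
    ∃ M A, SpinArrow n n M A B := by
  have hC : (B.erase n).erase (n - 1) ⊆ Icc 1 (n - 2) := fun b hb => by
    obtain ⟨hne, hb⟩ := mem_erase.1 hb
    obtain ⟨hne', hb⟩ := mem_erase.1 hb
    have hbn := mem_Icc.1 (hB hb)
    exact mem_Icc.2 ⟨hbn.1, by omega⟩
  have harrow := add hC
  rw [insert_erase (mem_erase.2 ⟨by omega, h⟩), insert_erase h'] at harrow
  exact ⟨_, _, harrow⟩

lemma source_or_target_or_apply_eq_zero (hn : 2 ≤ n) (hadm : Admissible n ι)
    (hB : B ⊆ Icc 1 n) (hi : 1 ≤ i) (hin : i ≤ n) :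
    (∃ M A, SpinArrow n i M B A) ∨ (∃ M A, SpinArrow n i M A B) ∨
      ∀ (s : ℤ) (m : ℕ), 1 ≤ m → spinTab ι n s B (occPos ι i m) = 0 := by
  rcases hin.lt_or_eq with hin | rfl
  · by_cases h : i ∈ B <;> by_cases h' : i + 1 ∈ B
    · refine .inr (.inr fun s m hm => ?_)
      rw [spinTab_apply_occPos_of_lt hadm hB hi hin hm, if_pos h, if_pos h', Nat.count_succ,
        if_pos h]
      split_ifs <;> first | omega | simp
    · exact .inr (.inl (exists_source_of_succ_notMem hB hi hin h h'))
    · exact .inl (exists_target_of_succ_mem hB hi hin h h')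
    · refine .inr (.inr fun s m hm => ?_)
      rw [spinTab_apply_occPos_of_lt hadm hB hi hin hm, if_neg h, if_neg h', sub_zero]
  · have hcount : #B = Nat.count (· ∈ B) i + if i ∈ B then 1 else 0 := by
      rw [← Nat.count_succ,
        count_mem_eq_card fun b hb => Nat.lt_succ_of_le (mem_Icc.1 (hB hb)).2]
    have hcount' : Nat.count (· ∈ B) i =
        Nat.count (· ∈ B) (i - 1) + if i - 1 ∈ B then 1 else 0 := by
      rw [← Nat.count_succ, Nat.sub_add_cancel hi]
    by_cases h : i - 1 ∈ B <;> by_cases h' : i ∈ B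
    · exact .inr (.inl (exists_source_of_mem hi hB h h'))
    · refine .inr (.inr fun s m hm => ?_)
      rw [spinTab_apply_occPos_self hadm hn hB hm, hcount, hcount', if_pos h, if_neg h']
      simp [h, h', add_assoc]
    · refine .inr (.inr fun s m hm => ?_)
      rw [spinTab_apply_occPos_self hadm hn hB hm, hcount]
      simp [h, h', add_assoc]
    · exact .inl (exists_target_of_notMem hB h h')

end SpinArrow

lemma exists_Sop_spinTab_eq (hn : 3 ≤ n) (hadm : Admissible n ι)
    (hadap : Adapted n (cartanD n) ι) (hB : B ⊆ Icc 1 n) {k : ℕ} (hk : 1 ≤ k) (s : ℤ) :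
    ∃ B' ⊆ Icc 1 n, #B' % 2 = #B % 2 ∧
      Sop (cartanD n) ι k (spinTab ι n s B) = spinTab ι n s B' := by
  obtain ⟨hi, hin⟩ := hadm.1 k hk
  have hinf := hadm.infinite_letter hi hin
  obtain ⟨m, hm, hmk⟩ := exists_occPos_eq hk hinf
  generalize ι k = i at *
  subst hmk
  have hfixed (h0 : spinTab ι n s B (occPos ι i m) = 0) : ∃ B' ⊆ Icc 1 n, #B' % 2 = #B % 2 ∧
      Sop (cartanD n) ι (occPos ι i m) (spinTab ι n s B) = spinTab ι n s B' :=
    ⟨B, hB, rfl, Sop_of_apply_eq_zero h0⟩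
  rcases SpinArrow.source_or_target_or_apply_eq_zero (by omega) hadm hB hi hin with
    ⟨M, A, harrow⟩ | ⟨M, A, harrow⟩ | h0
  · have hval := harrow.spinTab_source_apply (by omega) hadm hm s
    split_ifs at hval with hs
    · exact ⟨A, harrow.target_subset (by omega), harrow.card_target_mod_two (by omega),
        (Sop_of_apply_eq_one hval).trans (harrow.spinTab_target hn hadm hadap hm hs).symm⟩
    · exact hfixed hval
  · have hval := harrow.spinTab_target_apply (by omega) hadm hm s
    split_ifs at hval with hs
    · obtain ⟨t, rfl⟩ := Nat.exists_eq_add_of_le' hm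
      have hSop := Sop_of_apply_eq_neg_one (A := cartanD n) (ι := ι) hval
      rw [kminus_occPos_succ hinf] at hSop
      rcases t.eq_zero_or_pos with rfl | ht
      · exact ⟨B, hB, rfl, hSop.trans (by rw [occPos, beta_zero, add_zero])⟩
      · refine ⟨A, harrow.source_subset, (harrow.card_target_mod_two (by omega)).symm, ?_⟩
        rw [hSop, harrow.spinTab_target hn hadm hadap ht (by omega), sub_add_cancel]
    · exact hfixed hval
  · exact hfixed (h0 s m hm)

end SpinTableaux

/-! ### Reachability from the highest weights -/

section Reachability

open Finset

variable {n : ℕ} {ι : ℕ → ℕ} {B : Finset ℕ}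

lemma PD_le_add_sub {i j : ℕ} (hi : 1 ≤ i) (hij : i ≤ j) (hjn : j < n) :
    PD ι n j ≤ PD ι n i + (j - i) := by
  induction j, hij using Nat.le_induction with
  | base => exact Nat.le_add_right _ _
  | succ j hij ih =>
    have hp := pval_le_one (ι := ι) (j + 1) j
    rw [PD_succ (hi.trans hij) hjn]
    have := ih (by omega)
    omega

/-- The node of the Dynkin diagram of type D whose fundamental half-spin representation is
indexed by the columns with first entry `ovl(n+1)` and `k` entries in total: `n - 1` for `k`
even, `n` for `k` odd. -/
def spinNode (n k : ℕ) : ℕ := if k % 2 = 0 then n - 1 else n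

lemma spinNode_congr {k l : ℕ} (h : k % 2 = l % 2) : spinNode n k = spinNode n l := by
  rw [spinNode, spinNode, h]

lemma spinTab_eq_coordD_spinNode (hn : 1 ≤ n) (hB : B ⊆ {n}) (s : ℤ) :
    spinTab ι n s B = coordD ι n s (spinNode n (#B + 1)) := by
  rcases subset_singleton_iff.1 hB with rfl | rfl
  · rw [spinTab, card_empty, sum_empty, add_zero, boxD_zero, Nat.cast_zero, add_zero]
    rfl
  · have hcount : Nat.count (· ∈ ({n} : Finset ℕ)) n = 0 := by
      rw [← insert_empty_eq, count_mem_insert (notMem_empty n)]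
      simp
    rw [spinTab, card_singleton, sum_singleton, hcount, boxD_zero, boxD_bar hn le_rfl,
      if_neg (lt_irrefl n), if_pos n.le_succ, Nat.cast_zero, Nat.cast_one, add_zero,
      add_sub_cancel_right, sub_zero, add_sub_cancel]
    rfl

namespace SpinArrow

variable {i M : ℕ} {B' : Finset ℕ}

lemma sum_source_lt_sum_target (hn : 2 ≤ n) (h : SpinArrow n i M B B') :
    ∑ b ∈ B, (n + 1 - b) < ∑ b ∈ B', (n + 1 - b) := by
  rcases h with ⟨-, hin, -, h, h'⟩ | ⟨hC⟩
  · rw [sum_insert h, sum_insert h']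
    omega
  · obtain ⟨h, h'⟩ := notMem_insert_of_subset_Icc_sub_two hn hC
    rw [sum_insert h', sum_insert h]
    omega

lemma exists_source (hn : 1 ≤ n) (hB : B ⊆ Icc 1 n) (hBn : ¬B ⊆ {n}) :
    ∃ i M A, SpinArrow n i M A B := by
  by_contra! hsource
  obtain ⟨b, hb, hbn⟩ : ∃ b ∈ B, b ≠ n := by
    simpa only [not_subset, mem_singleton, exists_prop] using hBn
  have hb' := mem_Icc.1 (hB hb)
  have hup : ∀ c, b ≤ c → c ≤ n → c ∈ B := by
    intro c hbc
    induction c, hbc using Nat.le_induction with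
    | base => exact fun _ => hb
    | succ c hbc ih =>
      intro hcn
      by_contra hc
      obtain ⟨M, A, h⟩ :=
        exists_source_of_succ_notMem hB (hb'.1.trans hbc) hcn (ih (by omega)) hc
      exact hsource _ _ _ h
  obtain ⟨M, A, h⟩ :=
    exists_source_of_mem hn hB (hup (n - 1) (by omega) (by omega)) (hup n hb'.2 le_rfl)
  exact hsource _ _ _ h

lemma PD_spinNode_le (hn : 3 ≤ n) (h : SpinArrow n i M B B') :
    PD ι n (spinNode n (#B + 1)) ≤ M + PD ι n i := by
  have hp := pval_le_one (ι := ι) n (n - 2)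
  have hp' := pval_le_one (ι := ι) (n - 1) (n - 2)
  have hPn := PD_self (ι := ι) (n := n) (by omega)
  have hPn' : PD ι n (n - 1) = PD ι n (n - 2) + pval ι (n - 1) (n - 2) := by
    have := PD_succ (ι := ι) (n := n) (i := n - 2) (by omega) (by omega)
    rwa [show n - 2 + 1 = n - 1 by omega] at this
  rcases h with @⟨_, C, hi, hin, hC, h, h'⟩ | hC
  · have hPi := PD_le_add_sub (ι := ι) hi (Nat.le_sub_one_of_lt hin) (by omega : n - 1 < n)
    rw [card_insert_of_notMem h', spinNode]
    split_ifs with hparity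
    · omega
    · rcases (Nat.le_sub_one_of_lt hin).lt_or_eq with hin' | rfl
      · have := PD_le_add_sub (ι := ι) hi (by omega : i ≤ n - 2) (by omega : n - 2 < n)
        omega
      · rw [Nat.sub_add_cancel (by omega)] at h'
        have hcount : Nat.count (· ∈ C) (n - 1) = #C := count_mem_eq_card fun b hb => by
          have hbn := mem_Icc.1 (hC hb)
          have := ne_of_mem_of_not_mem hb h
          have := ne_of_mem_of_not_mem hb h'
          omega
        omega
  · rw [spinNode]
    split_ifs <;> omega

end SpinArrow

lemma xiMemFrom_spinTab {B : Finset ℕ} (hn : 3 ≤ n) (hadm : Admissible n ι)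
    (hadap : Adapted n (cartanD n) ι) (hB : B ⊆ Icc 1 n) {s : ℤ}
    (hs : 1 - (PD ι n (spinNode n (#B + 1)) : ℤ) ≤ s) :
    XiMemFrom (cartanD n) ι
      {ψ | ∃ r, 1 ≤ r ∧ ψ = xc (occPos ι (spinNode n (#B + 1)) r)} (spinTab ι n s B) := by
  by_cases hBn : B ⊆ {n}
  · obtain ⟨r, hr⟩ := Int.eq_ofNat_of_zero_le
      (show 0 ≤ s + (PD ι n (spinNode n (#B + 1)) : ℤ) by omega)
    refine .base _ ⟨r, by omega, ?_⟩
    rw [spinTab_eq_coordD_spinNode (by omega) hBn, coordD_eq_xc ?_ ?_ (by omega) hr] <;>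
      rw [spinNode] <;> split_ifs <;> omega
  · obtain ⟨i, M, A, h⟩ := SpinArrow.exists_source (by omega) hB hBn
    have hlt := h.sum_source_lt_sum_target (by omega)
    have hparity : (#A + 1) % 2 = (#B + 1) % 2 := by
      have := h.card_target_mod_two (by omega)
      omega
    have hP := h.PD_spinNode_le (ι := ι) hn
    rw [← spinNode_congr hparity] at hs ⊢
    obtain ⟨m, hm⟩ := Int.eq_ofNat_of_zero_le (show 0 ≤ s + (M : ℤ) + PD ι n i by omega)
    have hm1 : 1 ≤ m := by omega
    have hSop := Sop_of_apply_eq_one (A := cartanD n) (ι := ι)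
      ((h.spinTab_source_apply (by omega) hadm hm1 s).trans (if_pos hm))
    rw [h.spinTab_target hn hadm hadap hm1 hm, ← hSop]
    have hi := mem_Icc.1 (h.colour_mem_Icc (by omega))
    exact .step _ (occPos_pos (hadm.infinite_letter hi.1 hi.2) hm1) _
      (xiMemFrom_spinTab hn hadm hadap h.source_subset hs)
termination_by ∑ b ∈ B, (n + 1 - b)

lemma xiMemFrom_iff_exists_spinTab (hn : 3 ≤ n) (hadm : Admissible n ι)
    (hadap : Adapted n (cartanD n) ι) (q : ℕ) {φ : ℕ → ℚ} :
    XiMemFrom (cartanD n) ι {ψ | ∃ r, 1 ≤ r ∧ ψ = xc (occPos ι (spinNode n q) r)} φ ↔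
      ∃ s : ℤ, 1 - (PD ι n (spinNode n q) : ℤ) ≤ s ∧
        ∃ B ⊆ Icc 1 n, (#B + 1) % 2 = q % 2 ∧ φ = spinTab ι n s B := by
  refine ⟨fun hφ => ?_, ?_⟩
  · induction hφ with
    | base φ hφ =>
      obtain ⟨r, hr, rfl⟩ := hφ
      obtain ⟨B, hB, hparity⟩ : ∃ B ⊆ ({n} : Finset ℕ), (#B + 1) % 2 = q % 2 := by
        rcases q.mod_two_eq_zero_or_one with hq | hq
        · exact ⟨{n}, Subset.rfl, by rw [card_singleton, hq]⟩
        · exact ⟨∅, empty_subset _, by rw [card_empty, hq]⟩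
      refine ⟨r - PD ι n (spinNode n q), by omega, B,
        hB.trans (singleton_subset_iff.2 (mem_Icc.2 ⟨by omega, le_rfl⟩)), hparity, ?_⟩
      rw [spinTab_eq_coordD_spinNode (by omega) hB, spinNode_congr hparity,
        coordD_eq_xc ?_ ?_ hr (sub_add_cancel _ _)] <;> rw [spinNode] <;> split_ifs <;> omega
    | step k hk φ _ ih =>
      obtain ⟨s, hs, B, hB, hparity, rfl⟩ := ih
      obtain ⟨B', hB', hparity', hSop⟩ := exists_Sop_spinTab_eq hn hadm hadap hB hk s
      exact ⟨s, hs, B', hB', by omega, hSop⟩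
  · rintro ⟨s, hs, B, hB, hparity, rfl⟩
    rw [← spinNode_congr hparity] at hs ⊢
    exact xiMemFrom_spinTab hn hadm hadap hB hs

end Reachability

/-! ### Columns with first entry `ovl(n+1)` -/

section Columns

open Finset

variable {n N : ℕ} {ι : ℕ → ℕ} {e : ℕ → ℕ}

lemma exists_strictMonoOn_image_range_eq (B : Finset ℕ) :
    ∃ e : ℕ → ℕ, StrictMonoOn e (Set.Iio #B) ∧ (range #B).image e = B := by
  have hfin : (Set.ofPred (· ∈ B)).Finite := B.finite_toSet
  have hB : hfin.toFinset = B := by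
    ext b
    rw [Set.Finite.mem_toFinset, Set.mem_ofPred_eq]
  have hmono := Nat.nth_strictMonoOn hfin
  have himage := Nat.image_nth_Iio_card hfin
  rw [hB] at hmono himage
  refine ⟨Nat.nth (· ∈ B), hmono, coe_injective ?_⟩
  rw [coe_image, coe_range, himage]
  rfl

lemma count_mem_image_range (he : StrictMonoOn e (Set.Iio N)) {t : ℕ} (ht : t < N) :
    Nat.count (· ∈ (range N).image e) (e t) = t := by
  have hfilter : {b ∈ range (e t) | b ∈ (range N).image e} = (range t).image e := by
    ext b
    simp only [mem_filter, mem_image, mem_range]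
    constructor
    · rintro ⟨hlt, u, hu, rfl⟩
      exact ⟨u, (he.lt_iff_lt hu ht).1 hlt, rfl⟩
    · rintro ⟨u, hu, rfl⟩
      exact ⟨he (hu.trans ht) ht hu, u, hu.trans ht, rfl⟩
  rw [Nat.count_eq_card_filter_range, hfilter, card_image_of_injOn, card_range]
  exact he.injOn.mono fun u hu => (mem_range.1 hu).trans ht

lemma card_image_range (he : StrictMonoOn e (Set.Iio N)) : #((range N).image e) = N := by
  rw [card_image_of_injOn (by simpa using he.injOn), card_range]

lemma spinTab_image_range (he : StrictMonoOn e (Set.Iio N)) (s : ℤ) :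
    spinTab ι n s ((range N).image e) =
      boxD ι n (s + N) 0 + ∑ t ∈ range N, boxD ι n (s + t) (2 * n + 1 - e t) := by
  rw [spinTab, card_image_range he, sum_image (by simpa using he.injOn)]
  congr 1
  exact sum_congr rfl fun t ht => by rw [count_mem_image_range he (mem_range.1 ht)]

lemma tab_succ (box : ℤ → ℕ → ℕ → ℚ) (s : ℤ) (N : ℕ) (j : ℕ → ℕ) :
    tab box s (N + 1) j = box (s + N) (j 1) + ∑ t ∈ range N, box (s + t) (j (N + 1 - t)) := by
  have hrev : tab box s (N + 1) j = ∑ t ∈ range (N + 1), box (s + t) (j (N + 1 - t)) := by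
    refine sum_nbij' (N + 1 - ·) (N + 1 - ·) ?_ ?_ ?_ ?_ ?_ <;> intro i hi <;>
      simp only [mem_Icc, mem_range] at hi ⊢
    iterate 4 omega
    rw [Nat.cast_sub hi.2, Nat.sub_sub_self hi.2, ← add_sub_assoc]
  rw [hrev, sum_range_succ, add_comm, Nat.add_sub_cancel_left]

lemma exists_spinTab_eq_tab {j : ℕ → ℕ} (hj : j 1 = 0)
    (hmem : ∀ i, 2 ≤ i → i ≤ N + 1 → n + 1 ≤ j i ∧ j i ≤ 2 * n)
    (hmono : ∀ i, 2 ≤ i → i < N + 1 → j i < j (i + 1)) (s : ℤ) :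
    ∃ B ⊆ Icc 1 n, #B = N ∧ spinTab ι n s B = tab (boxD ι n) s (N + 1) j := by
  have hmem' {t : ℕ} (ht : t ∈ range N) : n + 1 ≤ j (N + 1 - t) ∧ j (N + 1 - t) ≤ 2 * n :=
    hmem _ (by have := mem_range.1 ht; omega) (by omega)
  have he : StrictMonoOn (fun t => 2 * n + 1 - j (N + 1 - t)) (Set.Iio N) := by
    refine strictMonoOn_of_lt_add_one Set.ordConnected_Iio fun t _ ht ht' => ?_
    rw [Set.mem_Iio] at ht ht'
    have hlt := hmono (N - t) (by omega) (by omega)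
    have hle := hmem (N - t + 1) (by omega) (by omega)
    simp only [show N + 1 - t = N - t + 1 by omega, show N + 1 - (t + 1) = N - t by omega]
    omega
  refine ⟨_, fun b hb => ?_, card_image_range he, ?_⟩
  · obtain ⟨t, ht, rfl⟩ := mem_image.1 hb
    have := hmem' ht
    exact mem_Icc.2 (by omega)
  · rw [spinTab_image_range he, tab_succ, hj]
    congr 1
    refine sum_congr rfl fun t ht => ?_
    have := hmem' ht
    rw [Nat.sub_sub_self (by omega)]

lemma exists_tab_eq_spinTab {B : Finset ℕ} (hB : B ⊆ Icc 1 n) (s : ℤ) :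
    ∃ j : ℕ → ℕ, j 1 = 0 ∧ (∀ i, 2 ≤ i → i ≤ #B + 1 → n + 1 ≤ j i ∧ j i ≤ 2 * n) ∧
      (∀ i, 2 ≤ i → i < #B + 1 → j i < j (i + 1)) ∧
      tab (boxD ι n) s (#B + 1) j = spinTab ι n s B := by
  obtain ⟨e, he, himage⟩ := exists_strictMonoOn_image_range_eq B
  have hmem {t : ℕ} (ht : t < #B) : 1 ≤ e t ∧ e t ≤ n :=
    mem_Icc.1 (hB (himage ▸ mem_image_of_mem e (mem_range.2 ht)))
  refine ⟨fun i => if i = 1 then 0 else 2 * n + 1 - e (#B + 1 - i), if_pos rfl,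
    fun i hi hiB => ?_, fun i hi hiB => ?_, ?_⟩
  · have := hmem (t := #B + 1 - i) (by omega)
    simp only [if_neg (show i ≠ 1 by omega)]
    omega
  · have hlt := he (Set.mem_Iio.2 (by omega)) (Set.mem_Iio.2 (by omega))
      (by omega : #B + 1 - (i + 1) < #B + 1 - i)
    have hle := hmem (t := #B + 1 - i) (by omega)
    simp only [if_neg (show i ≠ 1 by omega), if_neg (show i + 1 ≠ 1 by omega)]
    omega
  · conv_rhs => rw [← himage]
    rw [spinTab_image_range he, tab_succ, if_pos rfl]
    congr 1
    refine sum_congr rfl fun t ht => ?_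
    have ht := mem_range.1 ht
    rw [if_neg (by omega), Nat.sub_sub_self (by omega)]

lemma setOf_xiMemFrom_spinNode_eq (hn : 3 ≤ n) (hadm : Admissible n ι)
    (hadap : Adapted n (cartanD n) ι) (q : ℕ) :
    {φ | XiMemFrom (cartanD n) ι {ψ | ∃ r, 1 ≤ r ∧ ψ = xc (occPos ι (spinNode n q) r)} φ} =
      {T | ∃ (k : ℕ) (s : ℤ) (j : ℕ → ℕ), j 1 = 0 ∧ 1 ≤ k ∧ k ≤ n + 1 ∧ k % 2 = q % 2 ∧
        (∀ i, 2 ≤ i → i ≤ k → n + 1 ≤ j i ∧ j i ≤ 2 * n) ∧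
        (∀ i, 2 ≤ i → i < k → j i < j (i + 1)) ∧
        1 - (PD ι n (spinNode n q) : ℤ) ≤ s ∧ T = tab (boxD ι n) s k j} := by
  ext T
  rw [Set.mem_ofPred_eq, Set.mem_ofPred_eq, xiMemFrom_iff_exists_spinTab hn hadm hadap]
  constructor
  · rintro ⟨s, hs, B, hB, hparity, rfl⟩
    obtain ⟨j, hj, hmem, hmono, htab⟩ := exists_tab_eq_spinTab (ι := ι) hB s
    have hcard : #B ≤ n := (card_le_card hB).trans_eq (by simp)
    exact ⟨#B + 1, s, j, hj, by omega, by omega, hparity, hmem, hmono, hs, htab.symm⟩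
  · rintro ⟨k, s, j, hj, hk, -, hparity, hmem, hmono, hs, rfl⟩
    obtain ⟨N, rfl⟩ := Nat.exists_eq_add_of_le' hk
    obtain ⟨B, hB, rfl, hspin⟩ := exists_spinTab_eq_tab (ι := ι) hj hmem hmono s
    exact ⟨s, hs, B, hB, hparity, hspin.symm⟩

end Columns

/-- Lemma 5.10: in type D, (i) the forms obtained from the `x_{r,n-1}` (`r ≥ 1`) by the
operators `S_l` are exactly the tableaux of `Tab_{D,ι}` with first entry `ovl(n+1)`
(encoded `0`) and an even number of rows; (ii) those obtained from the `x_{r,n}` are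
exactly such tableaux with an odd number of rows. -/
theorem xi_from_xrn_D (n : ℕ) (hn : 4 ≤ n) (ι : ℕ → ℕ)
    (hadm : Admissible n ι) (hadap : Adapted n (cartanD n) ι) :
    ({ φ : ℕ → ℚ |
        XiMemFrom (cartanD n) ι { ψ | ∃ r, 1 ≤ r ∧ ψ = xc (occPos ι (n - 1) r) } φ } =
      { T : ℕ → ℚ | ∃ (k : ℕ) (s : ℤ) (j : ℕ → ℕ),
          j 1 = 0 ∧ 1 ≤ k ∧ k ≤ n + 1 ∧ k % 2 = 0 ∧
          (∀ i, 2 ≤ i → i ≤ k → n + 1 ≤ j i ∧ j i ≤ 2 * n) ∧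
          (∀ i, 2 ≤ i → i < k → j i < j (i + 1)) ∧
          1 - (PD ι n (n - 1) : ℤ) ≤ s ∧
          T = tab (boxD ι n) s k j }) ∧
    ({ φ : ℕ → ℚ |
        XiMemFrom (cartanD n) ι { ψ | ∃ r, 1 ≤ r ∧ ψ = xc (occPos ι n r) } φ } =
      { T : ℕ → ℚ | ∃ (k : ℕ) (s : ℤ) (j : ℕ → ℕ),
          j 1 = 0 ∧ 1 ≤ k ∧ k ≤ n + 1 ∧ k % 2 = 1 ∧
          (∀ i, 2 ≤ i → i ≤ k → n + 1 ≤ j i ∧ j i ≤ 2 * n) ∧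
          (∀ i, 2 ≤ i → i < k → j i < j (i + 1)) ∧
          1 - (PD ι n n : ℤ) ≤ s ∧
          T = tab (boxD ι n) s k j }) := by
  have hn3 : 3 ≤ n := by omega
  exact ⟨setOf_xiMemFrom_spinNode_eq hn3 hadm hadap 0,
    setOf_xiMemFrom_spinNode_eq hn3 hadm hadap 1⟩
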